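/- Under the compact nonzero-sum game setup with the quantization condition lim_{δ→0} ω_δ(2δ) = 0 and horizon T ∈ ℕ: for every ε > 0 there exists δ(ε) > 0 such that for all 0 < δ ≤ δ(ε), any Markov perfect Nash equilibrium π*_δ of the finite δ-model, extended to X via Q_δ, is a Markov perfect ε-Nash equilibrium of the original game; that is, for every player i = 1,…,N and every x ∈ X, J^i_0(π*_δ; x) ≤ J*_0(π^{*,-i}_δ; x) + ε, where J*_0(π^{*,-i}_δ;·) is the best-response value of player i (which equals the infimum over all policies of player i of the expected T-stage cost against the extended policies π^{*,-i}_δ). -/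

import Mathlib

open MeasureTheory Filter Topology

noncomputable section

/-- Total variation distance between two measures:
`‖μ − ν‖_TV = 2 sup_{D measurable} |μ(D) − ν(D)|`. -/
def tvDist {α : Type*} [MeasurableSpace α] (μ ν : Measure α) : ℝ :=
  2 * ⨆ D : {D : Set α // MeasurableSet D}, |(μ D.1).toReal - (ν D.1).toReal|

/-- The normalized restriction `ν^z_δ` of `ν` to the quantization cell `Q⁻¹{z}`. -/
def cellMeasure {X : Type*} [MeasurableSpace X] (ν : Measure X) (Q : X → X) (z : X) :
    Measure X :=
  (ν (Q ⁻¹' {z}))⁻¹ • ν.restrict (Q ⁻¹' {z})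

/-!
For a function `f` that is constant on the cells of the quantizer `Q`, the integral `∫ f ∂p(·|x,a)`
depends only on the push-forward of `p(·|x,a)` under `Q`, so the quantization condition and the
uniform continuity of the costs make the stage cost `c(x,a) + ∫ f ∂p(·|x,a)` oscillate by at most
a small `η` under perturbations of `(x, a)` of size `2δ`, uniformly over all such `f` bounded by a
given constant. Only the finite-model value is constant on cells, so it is interposed between the
two others. In each step of the backward recursion, averaging over a cell costs `η` when passing
from the cost-to-go to the finite-model value, and `2η` when passing from there to the
best-response value, where actions are moved to the net as well. Hence the gap at time `t` is
at most `3(T - t)η`.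
-/

section BoundedMeasurable

variable {α : Type*} [MeasurableSpace α]

/-- Measurable real functions bounded in absolute value by `R`: the class in which all value
functions live. -/
structure IsBoundedMeasurable (f : α → ℝ) (R : ℝ) : Prop where
  measurable : Measurable f
  abs_apply_le : ∀ x, |f x| ≤ R

namespace IsBoundedMeasurable

variable {f g : α → ℝ} {R S : ℝ}

theorem zero : IsBoundedMeasurable (fun _ : α => (0 : ℝ)) 0 :=
  ⟨measurable_const, fun _ => abs_zero.le⟩

theorem mono (hf : IsBoundedMeasurable f R) (hRS : R ≤ S) : IsBoundedMeasurable f S :=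
  ⟨hf.measurable, fun x => (hf.abs_apply_le x).trans hRS⟩

theorem add (hf : IsBoundedMeasurable f R) (hg : IsBoundedMeasurable g S) :
    IsBoundedMeasurable (fun x => f x + g x) (R + S) :=
  ⟨hf.measurable.add hg.measurable,
    fun x => (abs_add_le _ _).trans (add_le_add (hf.abs_apply_le x) (hg.abs_apply_le x))⟩

theorem comp {β : Type*} [MeasurableSpace β] {φ : β → α} (hf : IsBoundedMeasurable f R)
    (hφ : Measurable φ) : IsBoundedMeasurable (fun y => f (φ y)) R :=
  ⟨hf.measurable.comp hφ, fun y => hf.abs_apply_le (φ y)⟩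

theorem integrable (hf : IsBoundedMeasurable f R) (μ : Measure α) [IsFiniteMeasure μ] :
    Integrable f μ :=
  .of_bound hf.measurable.aestronglyMeasurable R (.of_forall hf.abs_apply_le)

theorem abs_integral_le (hf : IsBoundedMeasurable f R) (μ : Measure α) [IsProbabilityMeasure μ] :
    |∫ x, f x ∂μ| ≤ R := by
  simpa using norm_integral_le_of_norm_le_const (μ := μ) (f := f) (.of_forall hf.abs_apply_le)

theorem integral_le_integral_add (hf : IsBoundedMeasurable f R) (hg : IsBoundedMeasurable g S)
    (μ : Measure α) [IsProbabilityMeasure μ] {e : ℝ} (hfg : ∀ x, f x ≤ g x + e) :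
    ∫ x, f x ∂μ ≤ ∫ x, g x ∂μ + e := by
  calc ∫ x, f x ∂μ ≤ ∫ x, (g x + e) ∂μ :=
        integral_mono (hf.integrable μ) ((hg.integrable μ).add (integrable_const e)) hfg
    _ = ∫ x, g x ∂μ + e := by
        rw [integral_add (hg.integrable μ) (integrable_const e), integral_const, probReal_univ,
          one_smul]

theorem abs_integral_sub_integral_le (hf : IsBoundedMeasurable f R)
    (hg : IsBoundedMeasurable g S) (μ : Measure α) [IsProbabilityMeasure μ] {e : ℝ}
    (hfg : ∀ x, |f x - g x| ≤ e) : |∫ x, f x ∂μ - ∫ x, g x ∂μ| ≤ e := by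
  have hle := hf.integral_le_integral_add hg μ fun x => by linarith [(abs_le.1 (hfg x)).2]
  have hge := hg.integral_le_integral_add hf μ fun x => by linarith [(abs_le.1 (hfg x)).1]
  rw [abs_le]
  constructor <;> linarith

theorem integral_add_eq_integral_measureReal (hf : IsBoundedMeasurable f R) (μ : Measure α)
    [IsProbabilityMeasure μ] :
    ∫ x, f x ∂μ + R = ∫ t in Set.Ioc 0 (2 * R), μ.real {x | t ≤ f x + R} := by
  have hint : Integrable (fun x => f x + R) μ := (hf.integrable μ).add (integrable_const R)
  rw [← hint.integral_eq_integral_Ioc_meas_le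
      (.of_forall fun x => neg_le_iff_add_nonneg.1 (abs_le.1 (hf.abs_apply_le x)).1)
      (.of_forall fun x => by linarith [(abs_le.1 (hf.abs_apply_le x)).2]),
    integral_add (hf.integrable μ) (integrable_const R), integral_const, probReal_univ, one_smul]

theorem measurableSet_superlevel (hf : IsBoundedMeasurable f R) (t : ℝ) :
    MeasurableSet {x | t ≤ f x + R} :=
  measurableSet_le measurable_const (hf.measurable.add_const R)

end IsBoundedMeasurable

theorem isBoundedMeasurable_measureReal_superlevel (μ : Measure α) [IsProbabilityMeasure μ]
    (f : α → ℝ) : IsBoundedMeasurable (fun t : ℝ => μ.real {x | t ≤ f x}) 1 where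
  measurable := Antitone.measurable fun _ _ hst => measureReal_mono fun _ hx => hst.trans hx
  abs_apply_le _ := (abs_of_nonneg measureReal_nonneg).trans_le measureReal_le_one

/-- The layer-cake formula turns setwise continuity of `κ` into dominated convergence over the
levels. -/
theorem IsBoundedMeasurable.continuous_integral {W : Type*} [TopologicalSpace W]
    [FirstCountableTopology W] {f : α → ℝ} {R : ℝ} (hf : IsBoundedMeasurable f R)
    {κ : W → Measure α} [∀ w, IsProbabilityMeasure (κ w)]
    (hκ : ∀ D, MeasurableSet D → Continuous fun w => (κ w).real D) :
    Continuous fun w => ∫ x, f x ∂κ w := by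
  have hlevels : Continuous fun w =>
      ∫ t in Set.Ioc 0 (2 * R), (κ w).real {x | t ≤ f x + R} := by
    refine continuous_of_dominated (bound := fun _ => 1) (fun w => ?_) (fun w => ?_)
      (integrable_const 1) (.of_forall fun t => hκ _ (hf.measurableSet_superlevel t))
    · exact (isBoundedMeasurable_measureReal_superlevel (κ w) _).measurable.aestronglyMeasurable
    · exact .of_forall (isBoundedMeasurable_measureReal_superlevel (κ w) _).abs_apply_le
  have hrepr : (fun w => ∫ x, f x ∂κ w) =
      fun w => (∫ t in Set.Ioc 0 (2 * R), (κ w).real {x | t ≤ f x + R}) - R :=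
    funext fun w => eq_sub_of_add_eq (hf.integral_add_eq_integral_measureReal (κ w))
  rw [hrepr]
  exact hlevels.sub continuous_const

end BoundedMeasurable

section TotalVariation

variable {α : Type*} [MeasurableSpace α] (μ ν : Measure α) [IsProbabilityMeasure μ]
  [IsProbabilityMeasure ν]

theorem abs_measureReal_sub_le_one (D : Set α) : |μ.real D - ν.real D| ≤ 1 := by
  have hμ : μ.real D ≤ 1 := measureReal_le_one
  have hν : ν.real D ≤ 1 := measureReal_le_one
  rw [abs_le]
  constructor <;> linarith [measureReal_nonneg (μ := μ) (s := D),
    measureReal_nonneg (μ := ν) (s := D)]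

theorem tvDist_le_two : tvDist μ ν ≤ 2 := by
  have : Nonempty {D : Set α // MeasurableSet D} := ⟨⟨∅, .empty⟩⟩
  have := ciSup_le fun D : {D : Set α // MeasurableSet D} => abs_measureReal_sub_le_one μ ν D.1
  simp only [measureReal_def] at this
  unfold tvDist
  linarith

theorem abs_measureReal_sub_le_tvDist {D : Set α} (hD : MeasurableSet D) :
    |μ.real D - ν.real D| ≤ tvDist μ ν / 2 := by
  have hbdd : BddAbove (Set.range fun D : {D : Set α // MeasurableSet D} =>
      |μ.real D.1 - ν.real D.1|) :=
    ⟨1, Set.forall_mem_range.2 fun D => abs_measureReal_sub_le_one μ ν D.1⟩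
  have := le_ciSup hbdd ⟨D, hD⟩
  simp only [measureReal_def] at this ⊢
  unfold tvDist
  linarith

theorem IsBoundedMeasurable.abs_integral_sub_integral_le_tvDist {f : α → ℝ} {R : ℝ}
    (hf : IsBoundedMeasurable f R) :
    |∫ x, f x ∂μ - ∫ x, f x ∂ν| ≤ R * tvDist μ ν := by
  obtain ⟨x₀⟩ := nonempty_of_isProbabilityMeasure μ
  have hR : 0 ≤ R := (abs_nonneg _).trans (hf.abs_apply_le x₀)
  have hlevel (ρ : Measure α) [IsProbabilityMeasure ρ] :
      IntegrableOn (fun t => ρ.real {x | t ≤ f x + R}) (Set.Ioc 0 (2 * R)) :=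
    (isBoundedMeasurable_measureReal_superlevel ρ _).integrable _
  calc |∫ x, f x ∂μ - ∫ x, f x ∂ν|
      = |∫ t in Set.Ioc 0 (2 * R), (μ.real {x | t ≤ f x + R} - ν.real {x | t ≤ f x + R})| := by
        rw [integral_sub (hlevel μ) (hlevel ν), ← hf.integral_add_eq_integral_measureReal,
          ← hf.integral_add_eq_integral_measureReal, add_sub_add_right_eq_sub]
    _ ≤ tvDist μ ν / 2 * volume.real (Set.Ioc 0 (2 * R)) :=
        norm_setIntegral_le_of_norm_le_const
          (f := fun t => μ.real {x | t ≤ f x + R} - ν.real {x | t ≤ f x + R})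
          measure_Ioc_lt_top fun t _ =>
            abs_measureReal_sub_le_tvDist μ ν (hf.measurableSet_superlevel t)
    _ = R * tvDist μ ν := by
        rw [Real.volume_real_Ioc_of_le (by positivity)]
        ring

end TotalVariation

section Quantizer

theorem measurable_apply_of_countable_range {X Y Z : Type*} [MeasurableSpace X]
    [MeasurableSpace Y] [MeasurableSingletonClass Y] [MeasurableSpace Z] {Q : X → Y}
    (hQ : Measurable Q) (hrange : (Set.range Q).Countable) {F : Y → X → Z}
    (hF : ∀ y, Measurable (F y)) : Measurable fun x => F (Q x) x := by
  have : Countable (Set.range Q) := hrange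
  have hpair : Measurable fun q : Set.range Q × X => F q.1 q.2 :=
    measurable_from_prod_countable_right fun y => hF y
  exact hpair.comp ((hQ.subtype_mk (h := Set.mem_range_self)).prodMk measurable_id)

theorem isProbabilityMeasure_cellMeasure {X : Type*} [MeasurableSpace X] {ν : Measure X}
    [IsFiniteMeasure ν] {Q : X → X} {z : X} (hz : ν (Q ⁻¹' {z}) ≠ 0) :
    IsProbabilityMeasure (cellMeasure ν Q z) :=
  ProbabilityTheory.cond_isProbabilityMeasure hz

theorem abs_integral_cellMeasure_sub_le {X : Type*} [MeasurableSpace X]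
    [MeasurableSingletonClass X] {ν : Measure X} [IsFiniteMeasure ν] {Q : X → X}
    (hQ : Measurable Q) {z : X} (hz : ν (Q ⁻¹' {z}) ≠ 0) {u : X → ℝ} {R : ℝ}
    (hu : IsBoundedMeasurable u R) {r η : ℝ} (h : ∀ x, Q x = z → |u x - r| ≤ η) :
    |∫ x, u x ∂cellMeasure ν Q z - r| ≤ η := by
  have := isProbabilityMeasure_cellMeasure hz
  have hcell : ∀ᵐ x ∂cellMeasure ν Q z, Q x = z :=
    ProbabilityTheory.ae_cond_mem (hQ (measurableSet_singleton z))
  have hbound := norm_integral_le_of_norm_le_const (f := fun x => u x - r) (hcell.mono h)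
  rwa [integral_sub (hu.integrable _) (integrable_const r), integral_const, probReal_univ,
    one_smul, mul_one, Real.norm_eq_abs] at hbound

/-- A measurable quantizer of mesh `δ` all of whose cells are charged by the weighting measure
`ν`. The set of representatives is `Set.range Q`; it need not be a nearest-point quantizer. -/
structure IsQuantizer {X : Type*} [PseudoMetricSpace X] [MeasurableSpace X] (Q : X → X)
    (ν : Measure X) (δ : ℝ) : Prop where
  measurable : Measurable Q
  countable_range : (Set.range Q).Countable
  dist_le : ∀ x, dist x (Q x) ≤ δ
  cell_ne_zero : ∀ x, ν (Q ⁻¹' {Q x}) ≠ 0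

theorem IsQuantizer.of_nearest {X : Type*} [PseudoMetricSpace X] [MeasurableSpace X] {Q : X → X}
    {ν : Measure X} {δ : ℝ} {S : Set X} (hS : S.Countable) (hnet : ∀ x, ∃ z ∈ S, dist x z ≤ δ)
    (hmem : ∀ x, Q x ∈ S) (hnear : ∀ x, ∀ z ∈ S, dist x (Q x) ≤ dist x z) (hQ : Measurable Q)
    (hν : ∀ z ∈ S, 0 < ν (Q ⁻¹' {z})) : IsQuantizer Q ν δ where
  measurable := hQ
  countable_range := hS.mono (Set.range_subset_iff.2 hmem)
  dist_le x := (hnet x).elim fun z hz => (hnear x z hz.1).trans hz.2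
  cell_ne_zero x := (hν _ (hmem x)).ne'

theorem IsQuantizer.dist_le_of_apply_eq {X : Type*} [PseudoMetricSpace X] [MeasurableSpace X]
    {Q : X → X} {ν : Measure X} {δ : ℝ} (hQ : IsQuantizer Q ν δ) {x y : X} (h : Q x = Q y) :
    dist x y ≤ 2 * δ := by
  calc dist x y ≤ dist x (Q x) + dist y (Q x) := dist_triangle_right x y (Q x)
    _ ≤ δ + δ := add_le_add (hQ.dist_le x) (h ▸ hQ.dist_le y)
    _ = 2 * δ := (two_mul δ).symm

end Quantizer

section StageCost

variable {X B : Type*} [MeasurableSpace X]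

/-- The one-stage cost of the joint action `b` in state `x` plus the expectation of the
continuation value `f`. -/
def stageCost (c : X → B → ℝ) (p : X → B → Measure X) (f : X → ℝ) (x : X) (b : B) : ℝ :=
  c x b + ∫ y, f y ∂p x b

/-- The expected stage cost when the joint action has law `ρ`. -/
def mixedCost [MeasurableSpace B] (c : X → B → ℝ) (p : X → B → Measure X) (f : X → ℝ)
    (ρ : Measure B) (x : X) : ℝ :=
  ∫ b, stageCost c p f x b ∂ρ

/-- One player's view of the game: a uniformly continuous cost bounded by `C`, and a stochastic
kernel that is measurable in the joint action and setwise continuous in the state. -/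
structure IsStageModel [UniformSpace X] [UniformSpace B] [MeasurableSpace B] (c : X → B → ℝ)
    (p : X → B → Measure X) (C : ℝ) : Prop where
  uniformContinuous_cost : UniformContinuous fun q : X × B => c q.1 q.2
  bound_nonneg : 0 ≤ C
  abs_cost_le : ∀ x b, |c x b| ≤ C
  isProbabilityMeasure : ∀ x b, IsProbabilityMeasure (p x b)
  measurable_kernel : ∀ x, Measurable (p x)
  continuous_kernel : ∀ b D, MeasurableSet D → Continuous fun x => (p x b).real D

namespace IsStageModel

variable [UniformSpace X] [UniformSpace B] [MeasurableSpace B]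
  {c : X → B → ℝ} {p : X → B → Measure X} {C R S : ℝ} {f g : X → ℝ}

theorem isBoundedMeasurable_stageCost [OpensMeasurableSpace B] (hM : IsStageModel c p C)
    (hf : IsBoundedMeasurable f R) (x : X) : IsBoundedMeasurable (stageCost c p f x) (C + R) := by
  have := hM.isProbabilityMeasure
  let κ : ProbabilityTheory.Kernel B X := ⟨p x, hM.measurable_kernel x⟩
  have hcost : Continuous (c x) :=
    hM.uniformContinuous_cost.continuous.comp (Continuous.prodMk_right x)
  have hint : Measurable fun b => ∫ y, f y ∂κ b :=
    (hf.measurable.stronglyMeasurable.integral_kernel (κ := κ)).measurable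
  exact .add ⟨hcost.measurable, hM.abs_cost_le x⟩ ⟨hint, fun b => hf.abs_integral_le (p x b)⟩

theorem continuous_stageCost [FirstCountableTopology X] (hM : IsStageModel c p C)
    (hf : IsBoundedMeasurable f R) (b : B) : Continuous fun x => stageCost c p f x b := by
  have := hM.isProbabilityMeasure
  exact (hM.uniformContinuous_cost.continuous.comp (Continuous.prodMk_left b)).add
    (hf.continuous_integral (hM.continuous_kernel b))

theorem stageCost_le_stageCost_add (hM : IsStageModel c p C) (hf : IsBoundedMeasurable f R)
    (hg : IsBoundedMeasurable g S) {e : ℝ} (hfg : ∀ x, f x ≤ g x + e) (x : X) (b : B) :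
    stageCost c p f x b ≤ stageCost c p g x b + e := by
  have := hM.isProbabilityMeasure x b
  unfold stageCost
  linarith [hf.integral_le_integral_add hg (p x b) hfg]

theorem mixedCost_le_mixedCost_add [OpensMeasurableSpace B] (hM : IsStageModel c p C)
    (hf : IsBoundedMeasurable f R) (hg : IsBoundedMeasurable g S) {e : ℝ}
    (hfg : ∀ x, f x ≤ g x + e) (ρ : Measure B) [IsProbabilityMeasure ρ] (x : X) :
    mixedCost c p f ρ x ≤ mixedCost c p g ρ x + e :=
  (hM.isBoundedMeasurable_stageCost hf x).integral_le_integral_add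
    (hM.isBoundedMeasurable_stageCost hg x) ρ (hM.stageCost_le_stageCost_add hf hg hfg x)

theorem continuous_mixedCost [FirstCountableTopology X] [OpensMeasurableSpace B]
    (hM : IsStageModel c p C) (hf : IsBoundedMeasurable f R) (ρ : Measure B)
    [IsFiniteMeasure ρ] : Continuous (mixedCost c p f ρ) :=
  continuous_of_dominated
    (fun x => (hM.isBoundedMeasurable_stageCost hf x).measurable.aestronglyMeasurable)
    (fun x => .of_forall (hM.isBoundedMeasurable_stageCost hf x).abs_apply_le)
    (integrable_const (C + R)) (.of_forall (hM.continuous_stageCost hf))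

theorem isBoundedMeasurable_mixedCost [FirstCountableTopology X] [OpensMeasurableSpace X]
    [OpensMeasurableSpace B] (hM : IsStageModel c p C) (hf : IsBoundedMeasurable f R)
    (ρ : Measure B) [IsProbabilityMeasure ρ] :
    IsBoundedMeasurable (mixedCost c p f ρ) (C + R) :=
  ⟨(hM.continuous_mixedCost hf ρ).measurable,
    fun x => (hM.isBoundedMeasurable_stageCost hf x).abs_integral_le ρ⟩

end IsStageModel

theorem exists_forall_isStageModel {ι : Type*} [Finite ι] [UniformSpace X] [CompactSpace X]
    [UniformSpace B] [CompactSpace B] [MeasurableSpace B] {c : ι → X → B → ℝ}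
    {p : X → B → Measure X} (hc : ∀ i, Continuous fun q : X × B => c i q.1 q.2)
    (hp_prob : ∀ x b, IsProbabilityMeasure (p x b)) (hp_meas : ∀ x, Measurable (p x))
    (hp_cont : ∀ b D, MeasurableSet D → Continuous fun x => (p x b).real D) :
    ∃ C, ∀ i, IsStageModel (c i) p C := by
  have := Fintype.ofFinite ι
  obtain ⟨C, hC⟩ := (isCompact_range (continuous_pi hc)).isBounded.exists_norm_le
  refine ⟨max C 0, fun i => ?_⟩
  refine ⟨CompactSpace.uniformContinuous_of_continuous (hc i), le_max_right _ _, fun x b => ?_,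
    hp_prob, hp_meas, hp_cont⟩
  exact ((norm_le_pi_norm (fun i => c i x b) i).trans (hC _ ⟨(x, b), rfl⟩)).trans
    (le_max_left _ _)

end StageCost

section Oscillation

variable {X B : Type*} [PseudoMetricSpace X] [PseudoMetricSpace B]

theorem eventually_abs_cost_sub_lt {c : X → B → ℝ}
    (hc : UniformContinuous fun q : X × B => c q.1 q.2) {η : ℝ} (hη : 0 < η) :
    ∀ᶠ δ in 𝓝[>] (0 : ℝ), ∀ x y a b, dist x y + dist a b ≤ 2 * δ → |c x a - c y b| < η := by
  obtain ⟨r, hr, hcr⟩ := Metric.uniformContinuous_iff.1 hc η hη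
  filter_upwards [nhdsWithin_le_nhds (gt_mem_nhds (half_pos hr))] with δ hδ x y a b h
  have hdist : dist (x, a) (y, b) < r :=
    max_lt (by linarith [dist_nonneg (x := a) (y := b)])
      (by linarith [dist_nonneg (x := x) (y := y)])
  exact hcr hdist

variable [MeasurableSpace X]

/-- The modulus `ω_δ(r)`, in total variation, of the kernel pushed forward under the
quantizer `Q = Q_δ`. -/
def kernelModulus (p : X → B → Measure X) (Q : X → X) (r : ℝ) : ℝ :=
  sSup {v : ℝ | ∃ x y : X, ∃ a b : B, dist x y + dist a b ≤ r ∧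
    v = tvDist ((p x a).map Q) ((p y b).map Q)}

theorem tvDist_map_le_kernelModulus {p : X → B → Measure X}
    (hp : ∀ x b, IsProbabilityMeasure (p x b)) {Q : X → X} (hQ : Measurable Q) {r : ℝ}
    {x y : X} {a b : B} (h : dist x y + dist a b ≤ r) :
    tvDist ((p x a).map Q) ((p y b).map Q) ≤ kernelModulus p Q r := by
  have (x : X) (b : B) : IsProbabilityMeasure ((p x b).map Q) :=
    Measure.isProbabilityMeasure_map hQ.aemeasurable
  refine le_csSup ⟨2, ?_⟩ ⟨x, y, a, b, h, rfl⟩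
  rintro _ ⟨x, y, a, b, -, rfl⟩
  exact tvDist_le_two _ _

theorem abs_integral_sub_integral_le_kernelModulus {p : X → B → Measure X}
    (hp : ∀ x b, IsProbabilityMeasure (p x b)) {Q : X → X} (hQ : Measurable Q) {f : X → ℝ}
    {R : ℝ} (hf : IsBoundedMeasurable f R) (hfQ : ∀ x, f x = f (Q x)) {r : ℝ} {x y : X} {a b : B}
    (h : dist x y + dist a b ≤ r) :
    |∫ z, f z ∂p x a - ∫ z, f z ∂p y b| ≤ R * kernelModulus p Q r := by
  have (x : X) (b : B) : IsProbabilityMeasure ((p x b).map Q) :=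
    Measure.isProbabilityMeasure_map hQ.aemeasurable
  have hmap (x : X) (b : B) : ∫ z, f z ∂p x b = ∫ z, f z ∂(p x b).map Q := by
    rw [integral_map hQ.aemeasurable hf.measurable.aestronglyMeasurable]
    exact integral_congr_ae (.of_forall hfQ)
  have hR : 0 ≤ R := (abs_nonneg _).trans (hf.abs_apply_le x)
  rw [hmap, hmap]
  exact (hf.abs_integral_sub_integral_le_tvDist _ _).trans
    (mul_le_mul_of_nonneg_left (tvDist_map_le_kernelModulus hp hQ h) hR)

/-- Stage costs with a continuation value that is constant on the cells of `Q` and bounded by `R`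
vary by at most `η` when the state and the joint action move by at most `2 * δ` in total. -/
def StageOscillationLE (c : X → B → ℝ) (p : X → B → Measure X) (Q : X → X) (δ R η : ℝ) : Prop :=
  ∀ f : X → ℝ, IsBoundedMeasurable f R → (∀ x, f x = f (Q x)) →
    ∀ x y a b, dist x y + dist a b ≤ 2 * δ →
      |stageCost c p f x a - stageCost c p f y b| ≤ η

theorem eventually_stageOscillationLE [MeasurableSpace B] {c : X → B → ℝ}
    {p : X → B → Measure X} {C : ℝ} (hM : IsStageModel c p C) {Q : ℝ → X → X}
    (hQ : ∀ δ > 0, Measurable (Q δ))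
    (hquant : Tendsto (fun δ => kernelModulus p (Q δ) (2 * δ)) (𝓝[>] 0) (𝓝 0)) (R : ℝ) {η : ℝ}
    (hη : 0 < η) : ∀ᶠ δ in 𝓝[>] (0 : ℝ), StageOscillationLE c p (Q δ) δ R η := by
  have hkernel : ∀ᶠ δ in 𝓝[>] (0 : ℝ), R * kernelModulus p (Q δ) (2 * δ) < η / 2 :=
    (hquant.const_mul R).eventually (gt_mem_nhds (by simpa using half_pos hη))
  filter_upwards [self_mem_nhdsWithin, hkernel,
    eventually_abs_cost_sub_lt hM.uniformContinuous_cost (half_pos hη)]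
    with δ hδ hkernel hcost f hf hfQ x y a b h
  have hint := abs_integral_sub_integral_le_kernelModulus hM.isProbabilityMeasure (hQ δ hδ)
    hf hfQ h
  calc |stageCost c p f x a - stageCost c p f y b|
      = |(c x a - c y b) + (∫ z, f z ∂p x a - ∫ z, f z ∂p y b)| := by
        rw [stageCost, stageCost, add_sub_add_comm]
    _ ≤ |c x a - c y b| + |∫ z, f z ∂p x a - ∫ z, f z ∂p y b| := abs_add_le _ _
    _ ≤ η := by linarith [hcost x y a b h]

theorem StageOscillationLE.abs_integral_cellMeasure_mixedCost_sub_le [T1Space X]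
    [OpensMeasurableSpace X] [MeasurableSpace B] [OpensMeasurableSpace B] {c : X → B → ℝ}
    {p : X → B → Measure X} {C : ℝ} {Q : X → X} {ν : Measure X} [IsFiniteMeasure ν]
    {δ R η : ℝ} (hosc : StageOscillationLE c p Q δ R η) (hM : IsStageModel c p C)
    (hQ : IsQuantizer Q ν δ) {f : X → ℝ} (hf : IsBoundedMeasurable f R)
    (hfQ : ∀ x, f x = f (Q x)) (ρ : Measure B) [IsProbabilityMeasure ρ] (x : X) :
    |∫ y, mixedCost c p f ρ y ∂cellMeasure ν Q (Q x) - mixedCost c p f ρ x| ≤ η := by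
  refine abs_integral_cellMeasure_sub_le hQ.measurable (hQ.cell_ne_zero x)
    (hM.isBoundedMeasurable_mixedCost hf ρ) fun y hy => ?_
  refine (hM.isBoundedMeasurable_stageCost hf y).abs_integral_sub_integral_le
    (hM.isBoundedMeasurable_stageCost hf x) ρ fun b => hosc f hf hfQ y x b b ?_
  simpa using hQ.dist_le_of_apply_eq hy

end Oscillation

section Deviation

variable {ι : Type*} [Fintype ι] [DecidableEq ι] {A : ι → Type*} [∀ i, MeasurableSpace (A i)]

/-- The law of the joint action when player `i` plays the pure action `a` and every other player
`j` plays the mixed action `μ j`. -/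
def deviation (μ : ∀ j, Measure (A j)) (i : ι) (a : A i) : Measure (∀ j, A j) :=
  Measure.pi (Function.update μ i (Measure.dirac a))

theorem deviation_eq_map (μ : ∀ j, Measure (A j)) [∀ j, IsProbabilityMeasure (μ j)] (i : ι)
    (a : A i) : deviation μ i a = (Measure.pi μ).map fun b => Function.update b i a := by
  let F : ∀ j, A j → A j := Function.update (fun _ => id) i fun _ => a
  have hupdate (b : ∀ j, A j) : Function.update b i a = fun j => F j (b j) := by
    funext j
    rcases eq_or_ne j i with rfl | hj <;> simp [F, *]
  have hF (j : ι) : Measurable (F j) := by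
    rcases eq_or_ne j i with rfl | hj
    · simp [F]
    · simpa [F, hj] using measurable_id
  have hmap (j : ι) : (μ j).map (F j) = Function.update μ i (Measure.dirac a) j := by
    rcases eq_or_ne j i with rfl | hj <;> simp [F, *]
  have (j : ι) : IsProbabilityMeasure ((μ j).map (F j)) :=
    Measure.isProbabilityMeasure_map (hF j).aemeasurable
  simp_rw [hupdate]
  rw [Measure.pi_map_pi fun j => (hF j).aemeasurable]
  simp_rw [hmap]
  rfl

instance (μ : ∀ j, Measure (A j)) [∀ j, IsProbabilityMeasure (μ j)] (i : ι) (a : A i) :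
    IsProbabilityMeasure (deviation μ i a) := by
  rw [deviation_eq_map]
  exact Measure.isProbabilityMeasure_map (measurable_update_left).aemeasurable

theorem integral_deviation (μ : ∀ j, Measure (A j)) [∀ j, IsProbabilityMeasure (μ j)] (i : ι)
    (a : A i) {g : (∀ j, A j) → ℝ} (hg : Measurable g) :
    ∫ b, g b ∂deviation μ i a = ∫ b, g (Function.update b i a) ∂Measure.pi μ := by
  rw [deviation_eq_map, integral_map (measurable_update_left).aemeasurable
    hg.aestronglyMeasurable]

theorem StageOscillationLE.abs_mixedCost_deviation_sub_le {X : Type*} [PseudoMetricSpace X]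
    [MeasurableSpace X] [∀ i, PseudoMetricSpace (A i)] [∀ i, SecondCountableTopology (A i)]
    [∀ i, OpensMeasurableSpace (A i)] {c : X → (∀ i, A i) → ℝ} {p : X → (∀ i, A i) → Measure X}
    {C R δ η : ℝ} {Q : X → X} {i : ι}
    (hosc : StageOscillationLE c p Q δ R η) (hM : IsStageModel c p C) {f : X → ℝ}
    (hf : IsBoundedMeasurable f R) (hfQ : ∀ x, f x = f (Q x)) (μ : ∀ j, Measure (A j))
    [∀ j, IsProbabilityMeasure (μ j)] {a b : A i} (hab : dist a b ≤ δ) (x : X) :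
    |mixedCost c p f (deviation μ i a) x - mixedCost c p f (deviation μ i b) x| ≤ η := by
  have hcost := hM.isBoundedMeasurable_stageCost hf x
  have hδ : 0 ≤ δ := dist_nonneg.trans hab
  unfold mixedCost
  rw [integral_deviation μ i a hcost.measurable, integral_deviation μ i b hcost.measurable]
  refine (hcost.comp measurable_update_left).abs_integral_sub_integral_le
    (hcost.comp measurable_update_left) _ fun d => hosc f hf hfQ x x _ _ ?_
  have hupdate : dist (Function.update d i a) (Function.update d i b) ≤ δ := by
    refine (dist_pi_le_iff hδ).2 fun j => ?_
    rcases eq_or_ne j i with rfl | hj <;> simp [*]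
  rw [dist_self]
  linarith

end Deviation

section BackwardInduction

theorem le_add_mul_of_backward {X : Type*} {J J' : ℕ → X → ℝ} {T : ℕ} {η : ℝ}
    (hterminal : ∀ x, J T x = J' T x)
    (hstep : ∀ t < T, ∀ e, (∀ x, J (t + 1) x ≤ J' (t + 1) x + e) →
      ∀ x, J t x ≤ J' t x + (e + η))
    {t : ℕ} (ht : t ≤ T) : ∀ x, J t x ≤ J' t x + (T - t) * η := by
  induction ht using Nat.decreasingInduction with
  | self => simp [hterminal]
  | of_succ t ht ih =>
    intro x
    convert hstep t ht _ ih x using 2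
    push_cast
    ring

theorem isBoundedMeasurable_of_backward {X : Type*} [MeasurableSpace X] {J : ℕ → X → ℝ} {T : ℕ}
    {C : ℝ} (hC : 0 ≤ C) (hterminal : ∀ x, J T x = 0)
    (hstep : ∀ t < T, ∀ R, IsBoundedMeasurable (J (t + 1)) R →
      IsBoundedMeasurable (J t) (C + R))
    {t : ℕ} (ht : t ≤ T) : IsBoundedMeasurable (J t) (T * C) := by
  suffices h : IsBoundedMeasurable (J t) ((T - t) * C) from
    h.mono (mul_le_mul_of_nonneg_right (sub_le_self _ t.cast_nonneg) hC)
  induction ht using Nat.decreasingInduction with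
  | self => simpa [funext hterminal] using IsBoundedMeasurable.zero
  | of_succ t ht ih =>
    convert hstep t ht _ ih using 1
    push_cast
    ring

end BackwardInduction

section ValueFunctions

variable {X : Type*} [MetricSpace X] [MeasurableSpace X]
  {ι : Type*} [Fintype ι] {A : ι → Type*} [∀ i, MeasurableSpace (A i)]

/-- A Markov policy profile of the finite model, extended to `X` so as to be constant on the cells
of `Q`. -/
structure IsQuantizedPolicy (Q : X → X) (T : ℕ) (σ : ∀ i, ℕ → X → Measure (A i)) : Prop where
  isProbabilityMeasure : ∀ i, ∀ t < T, ∀ x, IsProbabilityMeasure (σ i t x)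
  apply_eq : ∀ i, ∀ t < T, ∀ x, σ i t x = σ i t (Q x)

/-- `J` is the cost-to-go, for the cost `c`, of the profile `σ` in the original game. -/
structure IsCostToGo (c : X → (∀ i, A i) → ℝ) (p : X → (∀ i, A i) → Measure X) (T : ℕ)
    (σ : ∀ i, ℕ → X → Measure (A i)) (J : ℕ → X → ℝ) : Prop where
  terminal : ∀ x, J T x = 0
  step : ∀ t < T, ∀ x, J t x = mixedCost c p (J (t + 1)) (Measure.pi fun j => σ j t x) x

variable [OpensMeasurableSpace X] [∀ i, PseudoMetricSpace (A i)]
  [∀ i, SecondCountableTopology (A i)] [∀ i, OpensMeasurableSpace (A i)]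
  {c : X → (∀ i, A i) → ℝ} {p : X → (∀ i, A i) → Measure X} {C : ℝ} {T : ℕ} {Q : X → X}
  {ν : Measure X} {δ η : ℝ} {σ : ∀ i, ℕ → X → Measure (A i)}
  {J : ℕ → X → ℝ} {t : ℕ}

theorem IsCostToGo.isBoundedMeasurable (hJ : IsCostToGo c p T σ J) (hM : IsStageModel c p C)
    (hQ : IsQuantizer Q ν δ) (hσ : IsQuantizedPolicy Q T σ) (ht : t ≤ T) :
    IsBoundedMeasurable (J t) (T * C) := by
  refine isBoundedMeasurable_of_backward hM.bound_nonneg hJ.terminal (fun t ht R hR => ?_) ht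
  have := (hσ.isProbabilityMeasure · t ht)
  have hmixed (z : X) := hM.isBoundedMeasurable_mixedCost hR (Measure.pi fun j => σ j t z)
  have hJt : J t = fun x =>
      mixedCost c p (J (t + 1)) (Measure.pi fun j => σ j t (Q x)) x := by
    funext x
    simp only [hJ.step t ht x, ← hσ.apply_eq _ t ht x]
  rw [hJt]
  exact ⟨measurable_apply_of_countable_range hQ.measurable hQ.countable_range
    fun z => (hmixed z).measurable, fun x => (hmixed (Q x)).abs_apply_le x⟩

variable [DecidableEq ι]

/-- `J` is the best-response value, for the cost `c`, of player `i` against `σ` in the original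
game. -/
structure IsBestResponseValue (c : X → (∀ i, A i) → ℝ) (p : X → (∀ i, A i) → Measure X) (T : ℕ)
    (σ : ∀ i, ℕ → X → Measure (A i)) (i : ι) (J : ℕ → X → ℝ) : Prop where
  terminal : ∀ x, J T x = 0
  step : ∀ t < T, ∀ x,
    J t x = ⨅ a, mixedCost c p (J (t + 1)) (deviation (fun j => σ j t x) i a) x

/-- `J` is the piecewise-constant extension of player `i`'s best-response value against `σ` in the
finite model with action set `Ad`, and the minimum in its recursion is attained by `σ i`. The
recursion is written at the representatives `Q x`. -/
structure IsQuantizedNashValue (c : X → (∀ i, A i) → ℝ) (p : X → (∀ i, A i) → Measure X) (T : ℕ)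
    (Q : X → X) (ν : Measure X) (σ : ∀ i, ℕ → X → Measure (A i)) (i : ι) (Ad : Set (A i))
    (J : ℕ → X → ℝ) : Prop where
  apply_eq : ∀ t ≤ T, ∀ x, J t x = J t (Q x)
  terminal : ∀ x, J T x = 0
  eq_sInf : ∀ t < T, ∀ x, J t (Q x) = sInf {v : ℝ | ∃ a ∈ Ad, v =
    ∫ y, mixedCost c p (J (t + 1)) (deviation (fun j => σ j t (Q x)) i a) y
      ∂cellMeasure ν Q (Q x)}
  attained : ∀ t < T, ∀ x, J t (Q x) =
    ∫ y, mixedCost c p (J (t + 1)) (Measure.pi fun j => σ j t (Q x)) y ∂cellMeasure ν Q (Q x)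

variable {i : ι} {Ad : Set (A i)} {Jd Js Ji : ℕ → X → ℝ}

theorem IsStageModel.isBoundedMeasurable_iInf_deviation [Nonempty (A i)]
    (hM : IsStageModel c p C) {f : X → ℝ} {R : ℝ} (hf : IsBoundedMeasurable f R)
    (μ : ∀ j, Measure (A j)) [∀ j, IsProbabilityMeasure (μ j)] :
    IsBoundedMeasurable (fun x => ⨅ a : A i, mixedCost c p f (deviation μ i a) x) (C + R) := by
  have hmixed (a : A i) := hM.isBoundedMeasurable_mixedCost hf (deviation μ i a)
  have hlower (x : X) (a : A i) : -(C + R) ≤ mixedCost c p f (deviation μ i a) x :=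
    (abs_le.1 ((hmixed a).abs_apply_le x)).1
  have hbdd (x : X) : BddBelow (Set.range fun a : A i => mixedCost c p f (deviation μ i a) x) :=
    ⟨-(C + R), Set.forall_mem_range.2 (hlower x)⟩
  constructor
  · exact (upperSemicontinuous_ciInf hbdd fun a =>
      (hM.continuous_mixedCost hf _).upperSemicontinuous).measurable
  · intro x
    obtain ⟨a⟩ := ‹Nonempty (A i)›
    exact abs_le.2 ⟨le_ciInf (hlower x),
      (ciInf_le (hbdd x) a).trans (abs_le.1 ((hmixed a).abs_apply_le x)).2⟩

theorem IsBestResponseValue.isBoundedMeasurable (hJ : IsBestResponseValue c p T σ i J)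
    (hM : IsStageModel c p C) (hQ : IsQuantizer Q ν δ) (hσ : IsQuantizedPolicy Q T σ)
    (ht : t ≤ T) : IsBoundedMeasurable (J t) (T * C) := by
  refine isBoundedMeasurable_of_backward hM.bound_nonneg hJ.terminal (fun t ht R hR => ?_) ht
  have := (hσ.isProbabilityMeasure · t ht)
  have hinf (z : X) :=
    have : Nonempty (A i) := nonempty_of_isProbabilityMeasure (σ i t z)
    hM.isBoundedMeasurable_iInf_deviation (i := i) hR fun j => σ j t z
  have hJt : J t = fun x =>
      ⨅ a, mixedCost c p (J (t + 1)) (deviation (fun j => σ j t (Q x)) i a) x := by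
    funext x
    simp only [hJ.step t ht x, ← hσ.apply_eq _ t ht x]
  rw [hJt]
  exact ⟨measurable_apply_of_countable_range hQ.measurable hQ.countable_range
    fun z => (hinf z).measurable, fun x => (hinf (Q x)).abs_apply_le x⟩

theorem IsQuantizedNashValue.isBoundedMeasurable [IsFiniteMeasure ν]
    (hJ : IsQuantizedNashValue c p T Q ν σ i Ad J) (hM : IsStageModel c p C)
    (hQ : IsQuantizer Q ν δ) (hσ : IsQuantizedPolicy Q T σ) (ht : t ≤ T) :
    IsBoundedMeasurable (J t) (T * C) := by
  refine isBoundedMeasurable_of_backward hM.bound_nonneg hJ.terminal (fun t ht R hR => ?_) ht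
  have := (hσ.isProbabilityMeasure · t ht)
  have hJt : J t = fun x => J t (Q x) := funext (hJ.apply_eq t ht.le)
  rw [hJt]
  refine ⟨measurable_apply_of_countable_range hQ.measurable hQ.countable_range
    (F := fun z _ => J t z) fun z => measurable_const, fun x => ?_⟩
  have := isProbabilityMeasure_cellMeasure (hQ.cell_ne_zero x)
  rw [hJ.attained t ht x]
  exact (hM.isBoundedMeasurable_mixedCost hR _).abs_integral_le _

theorem IsQuantizedNashValue.le_integral_deviation [IsFiniteMeasure ν]
    (hJ : IsQuantizedNashValue c p T Q ν σ i Ad J) (hM : IsStageModel c p C)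
    (hQ : IsQuantizer Q ν δ) (hσ : IsQuantizedPolicy Q T σ) (ht : t < T) {a : A i}
    (ha : a ∈ Ad) (x : X) :
    J t x ≤ ∫ y, mixedCost c p (J (t + 1)) (deviation (fun j => σ j t (Q x)) i a) y
      ∂cellMeasure ν Q (Q x) := by
  have := (hσ.isProbabilityMeasure · t ht)
  have := isProbabilityMeasure_cellMeasure (hQ.cell_ne_zero x)
  rw [hJ.apply_eq t ht.le x, hJ.eq_sInf t ht x]
  refine csInf_le ⟨-(C + T * C), ?_⟩ ⟨a, ha, rfl⟩
  rintro _ ⟨a, -, rfl⟩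
  have hbound := hM.isBoundedMeasurable_mixedCost (hJ.isBoundedMeasurable hM hQ hσ ht)
    (deviation (fun j => σ j t (Q x)) i a)
  exact (abs_le.1 (hbound.abs_integral_le _)).1

theorem IsCostToGo.le_quantizedNashValue_add [IsFiniteMeasure ν] (hJi : IsCostToGo c p T σ Ji)
    (hJd : IsQuantizedNashValue c p T Q ν σ i Ad Jd) (hM : IsStageModel c p C)
    (hQ : IsQuantizer Q ν δ) (hσ : IsQuantizedPolicy Q T σ)
    (hosc : StageOscillationLE c p Q δ (T * C) η) (ht : t ≤ T) :
    ∀ x, Ji t x ≤ Jd t x + (T - t) * η := by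
  refine le_add_mul_of_backward (fun x => by rw [hJi.terminal, hJd.terminal])
    (fun t ht e he x => ?_) ht
  have := (hσ.isProbabilityMeasure · t ht)
  have hbi := hJi.isBoundedMeasurable hM hQ hσ (t := t + 1) ht
  have hbd := hJd.isBoundedMeasurable hM hQ hσ (t := t + 1) ht
  have haverage := abs_le.1 (hosc.abs_integral_cellMeasure_mixedCost_sub_le hM hQ hbd
    (hJd.apply_eq (t + 1) ht) (Measure.pi fun j => σ j t (Q x)) x)
  calc Ji t x = mixedCost c p (Ji (t + 1)) (Measure.pi fun j => σ j t (Q x)) x := by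
        simp only [hJi.step t ht x, ← hσ.apply_eq _ t ht x]
    _ ≤ mixedCost c p (Jd (t + 1)) (Measure.pi fun j => σ j t (Q x)) x + e :=
        hM.mixedCost_le_mixedCost_add hbi hbd he _ x
    _ ≤ Jd t x + (e + η) := by
        rw [hJd.apply_eq t ht.le x, hJd.attained t ht x]
        linarith [haverage.1]

theorem IsQuantizedNashValue.le_bestResponseValue_add [IsFiniteMeasure ν]
    (hJd : IsQuantizedNashValue c p T Q ν σ i Ad Jd) (hJs : IsBestResponseValue c p T σ i Js)
    (hM : IsStageModel c p C) (hQ : IsQuantizer Q ν δ) (hAd : ∀ a : A i, ∃ b ∈ Ad, dist a b ≤ δ)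
    (hσ : IsQuantizedPolicy Q T σ) (hosc : StageOscillationLE c p Q δ (T * C) η) (ht : t ≤ T) :
    ∀ x, Jd t x ≤ Js t x + (T - t) * (2 * η) := by
  refine le_add_mul_of_backward (fun x => by rw [hJd.terminal, hJs.terminal])
    (fun t ht e he x => ?_) ht
  have := (hσ.isProbabilityMeasure · t ht)
  have : Nonempty (A i) := nonempty_of_isProbabilityMeasure (σ i t x)
  have hbd := hJd.isBoundedMeasurable hM hQ hσ (t := t + 1) ht
  have hbs := hJs.isBoundedMeasurable hM hQ hσ (t := t + 1) ht
  have hconst := hJd.apply_eq (t + 1) ht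
  let μ (j : ι) : Measure (A j) := σ j t (Q x)
  suffices h : ∀ a, Jd t x ≤ mixedCost c p (Js (t + 1)) (deviation μ i a) x + (e + 2 * η) by
    rw [hJs.step t ht x, ← sub_le_iff_le_add]
    simp only [hσ.apply_eq _ t ht x]
    exact le_ciInf fun a => sub_le_iff_le_add.2 (h a)
  intro a
  obtain ⟨b, hb, hab⟩ := hAd a
  have haverage := abs_le.1
    (hosc.abs_integral_cellMeasure_mixedCost_sub_le hM hQ hbd hconst (deviation μ i b) x)
  have haction := abs_le.1 (hosc.abs_mixedCost_deviation_sub_le hM hbd hconst μ hab x)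
  calc Jd t x
      ≤ ∫ y, mixedCost c p (Jd (t + 1)) (deviation μ i b) y ∂cellMeasure ν Q (Q x) :=
        hJd.le_integral_deviation hM hQ hσ ht hb x
    _ ≤ mixedCost c p (Jd (t + 1)) (deviation μ i b) x + η := by linarith [haverage.2]
    _ ≤ mixedCost c p (Jd (t + 1)) (deviation μ i a) x + 2 * η := by linarith [haction.1]
    _ ≤ mixedCost c p (Js (t + 1)) (deviation μ i a) x + (e + 2 * η) := by
        linarith [hM.mixedCost_le_mixedCost_add hbd hbs he (deviation μ i a) x]

theorem IsCostToGo.le_bestResponseValue_add [IsFiniteMeasure ν] (hJi : IsCostToGo c p T σ Ji)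
    (hJd : IsQuantizedNashValue c p T Q ν σ i Ad Jd) (hJs : IsBestResponseValue c p T σ i Js)
    (hM : IsStageModel c p C) (hQ : IsQuantizer Q ν δ) (hAd : ∀ a : A i, ∃ b ∈ Ad, dist a b ≤ δ)
    (hσ : IsQuantizedPolicy Q T σ) (hosc : StageOscillationLE c p Q δ (T * C) η) (ht : t ≤ T)
    (x : X) : Ji t x ≤ Js t x + (T - t) * (3 * η) := by
  linarith [hJi.le_quantizedNashValue_add hJd hM hQ hσ hosc ht x,
    hJd.le_bestResponseValue_add hJs hM hQ hAd hσ hosc ht x]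

end ValueFunctions

theorem finite_horizon_eps_nash_general
    {X : Type*} [MetricSpace X] [MeasurableSpace X] [OpensMeasurableSpace X]
    {ι : Type*} [Fintype ι] [DecidableEq ι] {A : ι → Type*} [∀ i, PseudoMetricSpace (A i)]
    [∀ i, SecondCountableTopology (A i)] [∀ i, MeasurableSpace (A i)]
    [∀ i, OpensMeasurableSpace (A i)]
    {c : ι → X → (∀ i, A i) → ℝ} {p : X → (∀ i, A i) → Measure X} {C : ℝ}
    (hM : ∀ i, IsStageModel (c i) p C) (T : ℕ)
    {Q : ℝ → X → X} {Ad : ℝ → ∀ i, Set (A i)} {ν : ℝ → Measure X}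
    (hν : ∀ δ > 0, IsFiniteMeasure (ν δ)) (hQ : ∀ δ > 0, IsQuantizer (Q δ) (ν δ) δ)
    (hAd : ∀ δ > 0, ∀ i, ∀ a : A i, ∃ b ∈ Ad δ i, dist a b ≤ δ)
    (hquant : Tendsto (fun δ => kernelModulus p (Q δ) (2 * δ)) (𝓝[>] 0) (𝓝 0))
    {ε : ℝ} (hε : 0 < ε) :
    ∃ δε > (0 : ℝ), ∀ δ, 0 < δ → δ ≤ δε →
      ∀ (σ : ∀ i, ℕ → X → Measure (A i)) (i : ι) (Jd Js Ji : ℕ → X → ℝ),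
        IsQuantizedPolicy (Q δ) T σ →
        IsQuantizedNashValue (c i) p T (Q δ) (ν δ) σ i (Ad δ i) Jd →
        IsBestResponseValue (c i) p T σ i Js → IsCostToGo (c i) p T σ Ji →
        ∀ t ≤ T, ∀ x, Ji t x ≤ Js t x + ε := by
  let η : ℝ := ε / (3 * (T + 1))
  have hη : 0 < η := by positivity
  have hgap (t : ℕ) : (T - t) * (3 * η) ≤ ε :=
    calc (T - t) * (3 * η) ≤ (T + 1) * (3 * η) :=
          mul_le_mul_of_nonneg_right (by linarith [t.cast_nonneg (α := ℝ)]) (by positivity)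
      _ = ε := by simp only [η]; field_simp
  have hosc : ∀ᶠ δ in 𝓝[>] 0, ∀ i, StageOscillationLE (c i) p (Q δ) δ (T * C) η :=
    eventually_all.2 fun i => eventually_stageOscillationLE (hM i)
      (fun δ hδ => (hQ δ hδ).measurable) hquant (T * C) hη
  obtain ⟨δε, hδε, hsub⟩ := mem_nhdsGT_iff_exists_Ioc_subset.1 hosc
  refine ⟨δε, hδε, fun δ hδ hle σ i Jd Js Ji hσ hJd hJs hJi t ht x => ?_⟩
  have := hν δ hδ
  exact (hJi.le_bestResponseValue_add hJd hJs (hM i) (hQ δ hδ) (hAd δ hδ i) hσ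
    (hsub ⟨hδ, hle⟩ i) ht x).trans (add_le_add_right (hgap t) _)

/-- Finite-horizon nonzero-sum Markov games: for every `ε > 0` there is `δ(ε) > 0` such that
for all `0 < δ ≤ δ(ε)`, any Markov perfect Nash equilibrium of the finite `δ`-model,
extended to `X` via the quantizer, is a Markov perfect `ε`-Nash equilibrium of the
original game. -/
theorem finite_horizon_eps_nash
    -- compact metric state space
    (X : Type*) [MetricSpace X] [CompactSpace X] [Nonempty X]
    [MeasurableSpace X] [BorelSpace X]
    -- compact metric action spaces of the N players
    (N : ℕ) (A : Fin N → Type*) [∀ i, MetricSpace (A i)] [∀ i, CompactSpace (A i)]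
    [∀ i, Nonempty (A i)] [∀ i, MeasurableSpace (A i)] [∀ i, BorelSpace (A i)]
    -- bounded continuous one-stage cost functions
    (c : Fin N → X → (∀ i, A i) → ℝ)
    (hc : ∀ i, Continuous fun q : X × (∀ i, A i) => c i q.1 q.2)
    -- setwise continuous Borel stochastic kernel
    (p : X → (∀ i, A i) → Measure X)
    (hp_prob : ∀ x a, IsProbabilityMeasure (p x a))
    (hp_meas : ∀ D : Set X, MeasurableSet D →
      Measurable fun q : X × (∀ i, A i) => p q.1 q.2 D)
    (hp_setwise : ∀ D : Set X, MeasurableSet D →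
      Continuous fun q : X × (∀ i, A i) => (p q.1 q.2 D).toReal)
    -- finite horizon
    (T : ℕ)
    -- quantization data: finite δ-nets, nearest-point quantizer, weighting measures
    (Xd : ℝ → Finset X) (Q : ℝ → X → X) (Ad : ℝ → ∀ i, Finset (A i)) (ν : ℝ → Measure X)
    (hXd_net : ∀ δ > (0:ℝ), ∀ x : X, ∃ z ∈ Xd δ, dist x z ≤ δ)
    (hQ_mem : ∀ δ > (0:ℝ), ∀ x, Q δ x ∈ Xd δ)
    (hQ_near : ∀ δ > (0:ℝ), ∀ x, ∀ z ∈ Xd δ, dist x (Q δ x) ≤ dist x z)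
    (hQ_meas : ∀ δ > (0:ℝ), Measurable (Q δ))
    (hAd_net : ∀ δ > (0:ℝ), ∀ i, ∀ a : A i, ∃ b ∈ Ad δ i, dist a b ≤ δ)
    (hν_prob : ∀ δ > (0:ℝ), IsProbabilityMeasure (ν δ))
    (hν_pos : ∀ δ > (0:ℝ), ∀ z ∈ Xd δ, 0 < ν δ (Q δ ⁻¹' {z}))
    -- the quantization condition `lim_{δ→0} ω_δ(2δ) = 0`
    (hquant : Tendsto
      (fun δ : ℝ => sSup {v : ℝ | ∃ x y : X, ∃ a b : ∀ i, A i,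
        dist x y + dist a b ≤ 2 * δ ∧
        v = tvDist ((p x a).map (Q δ)) ((p y b).map (Q δ))})
      (𝓝[>] 0) (𝓝 0)) :
    -- conclusion: ε-Nash property of any finite-model Markov perfect equilibrium
    ∀ ε > (0:ℝ), ∃ δε > (0:ℝ), ∀ δ : ℝ, 0 < δ → δ ≤ δε →
      ∀ (π : (i : Fin N) → ℕ → X → Measure (A i))
        (Jd Js Ji : Fin N → ℕ → X → ℝ),
      -- π is an (extended) Markov policy profile of the finite δ-model
      (∀ i t, t < T → ∀ x, IsProbabilityMeasure (π i t x)) →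
      (∀ i t, t < T → ∀ x, π i t x (Ad δ i) = 1) →
      (∀ i t, t < T → ∀ x, π i t x = π i t (Q δ x)) →
      -- Jd is the (extended) finite-model best-response value, and π is a Markov perfect
      -- Nash equilibrium of the finite δ-model: the minimum in the backward recursion
      -- is attained by π at every state of the net
      (∀ i t, t ≤ T → ∀ x, Jd i t x = Jd i t (Q δ x)) →
      (∀ i x, Jd i T x = 0) →
      (∀ i t, t < T → ∀ z ∈ Xd δ,
        Jd i t z = sInf {v : ℝ | ∃ a ∈ Ad δ i, v =
          ∫ x, (∫ b, (c i x b + ∫ y, Jd i (t+1) y ∂(p x b))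
              ∂(Measure.pi (Function.update (fun j => π j t z) i (Measure.dirac a))))
            ∂(cellMeasure (ν δ) (Q δ) z)}) →
      (∀ i t, t < T → ∀ z ∈ Xd δ,
        Jd i t z =
          ∫ x, (∫ b, (c i x b + ∫ y, Jd i (t+1) y ∂(p x b))
              ∂(Measure.pi fun j => π j t z))
            ∂(cellMeasure (ν δ) (Q δ) z)) →
      -- Js is the original-model best-response value against the extended policies
      (∀ i x, Js i T x = 0) →
      (∀ i t, t < T → ∀ x : X,
        Js i t x = ⨅ a : A i,
          ∫ b, (c i x b + ∫ y, Js i (t+1) y ∂(p x b))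
            ∂(Measure.pi (Function.update (fun j => π j t x) i (Measure.dirac a)))) →
      -- Ji is the cost-to-go of player i under the extended joint policy
      (∀ i x, Ji i T x = 0) →
      (∀ i t, t < T → ∀ x : X,
        Ji i t x =
          ∫ b, (c i x b + ∫ y, Ji i (t+1) y ∂(p x b))
            ∂(Measure.pi fun j => π j t x)) →
      -- ε-Nash property at time 0
      ∀ i : Fin N, ∀ x : X, Ji i 0 x ≤ Js i 0 x + ε := by
  intro ε hε
  obtain ⟨C, hM⟩ := exists_forall_isStageModel hc hp_prob
    (fun x => Measure.measurable_of_measurable_coe _ fun D hD =>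
      (hp_meas D hD).comp measurable_prodMk_left)
    fun b D hD => (hp_setwise D hD).comp (Continuous.prodMk_left b)
  have hQ (δ : ℝ) (hδ : 0 < δ) : IsQuantizer (Q δ) (ν δ) δ :=
    .of_nearest (Xd δ).countable_toSet (hXd_net δ hδ) (hQ_mem δ hδ) (hQ_near δ hδ) (hQ_meas δ hδ)
      (hν_pos δ hδ)
  obtain ⟨δε, hδε, hnash⟩ := finite_horizon_eps_nash_general hM T
    (fun δ hδ => have := hν_prob δ hδ; inferInstance) hQ hAd_net hquant hε
  exact ⟨δε, hδε, fun δ hδ hle π Jd Js Ji hπ _ hπQ hJdQ hJdT hJd_inf hJd_eq hJsT hJs hJiT hJi i =>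
    hnash δ hδ hle π i (Jd i) (Js i) (Ji i) ⟨hπ, hπQ⟩
      ⟨hJdQ i, hJdT i, fun t ht x => hJd_inf i t ht _ (hQ_mem δ hδ x),
        fun t ht x => hJd_eq i t ht _ (hQ_mem δ hδ x)⟩
      ⟨hJsT i, hJs i⟩ ⟨hJiT i, hJi i⟩ 0 T.zero_le⟩

end
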